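/- arXiv:2602.11109 — 5 statements merged into one kernel-verified Lean document; each statement's English description precedes it below -/
import Mathlib

section
/- There exists a constant c > 0 such that for every m ∈ ℕ with m ≥ 1 and every real x ≥ 0, one has |e^{−m·x} − (1 + x)^{−m}| ≤ c / m. -/
open Real

lemma be_pow_lower (x : ℝ) (hx : 0 ≤ x) (n : ℕ) :
    1 + n * x + n * (n - 1) / 2 * x ^ 2 ≤ (1 + x) ^ n := by
  induction n with
  | zero => simp
  | succ k ih =>
    rw [pow_succ]
    have h := mul_le_mul_of_nonneg_right ih (by linarith : 0 ≤ 1 + x)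
    refine le_trans ?_ h
    push_cast
    have hk : 0 ≤ (k : ℝ) * (k - 1) := by
      rcases Nat.eq_zero_or_pos k with rfl | h0
      · simp
      · have : (1 : ℝ) ≤ k := by exact_mod_cast h0
        exact mul_nonneg (by linarith) (by linarith)
    have h3 : 0 ≤ (k : ℝ) * (k - 1) * x ^ 3 := mul_nonneg hk (by positivity)
    nlinarith [h3]

/-- Scalar nonsmooth-data error estimate for the backward Euler scheme:
there is `c > 0` with `|e^{-mx} - (1+x)^{-m}| ≤ c/m` for all `m ≥ 1`, `x ≥ 0`. -/
theorem backward_euler_nonsmooth_symbol :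
    ∃ c : ℝ, 0 < c ∧ ∀ m : ℕ, 1 ≤ m → ∀ x : ℝ, 0 ≤ x →
      |Real.exp (-(m : ℝ) * x) - ((1 + x) ^ m)⁻¹| ≤ c / (m : ℝ) := by
  refine ⟨4, by norm_num, fun m hm x hx => ?_⟩
  have hE : Real.exp (-(m : ℝ) * x) = Real.exp (-x) ^ m := by
    rw [← Real.exp_nat_mul]; ring_nf
  have hm1 : (1 : ℝ) ≤ m := by exact_mod_cast hm
  have hq0 : 0 < Real.exp (-x) := Real.exp_pos _
  have hq1 : 1 - x ≤ Real.exp (-x) := by linarith [Real.add_one_le_exp (-x)]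
  have hq2 : (1 + x) * Real.exp (-x) ≤ 1 := by
    have h1 : Real.exp x * Real.exp (-x) = 1 := by rw [← Real.exp_add]; simp
    nlinarith [Real.add_one_le_exp x]
  have hlow := be_pow_lower x hx m
  have ha : 0 < (1 + x) ^ m := by positivity
  have hEa : Real.exp (-x) ^ m * (1 + x) ^ m = ((1 + x) * Real.exp (-x)) ^ m := by
    rw [mul_pow, mul_comm]
  have hy0 : 0 ≤ (1 + x) * Real.exp (-x) := by positivity
  have hup : Real.exp (-x) ^ m * (1 + x) ^ m ≤ 1 := by
    rw [hEa]; exact pow_le_one₀ hy0 hq2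
  have hdn : 1 - m * x ^ 2 ≤ Real.exp (-x) ^ m * (1 + x) ^ m := by
    rw [hEa]
    have h := one_add_mul_le_pow (a := (1 + x) * Real.exp (-x) - 1) (by linarith) m
    rw [add_sub_cancel] at h
    refine le_trans ?_ h
    have : -(x ^ 2) ≤ (1 + x) * Real.exp (-x) - 1 := by nlinarith
    nlinarith
  rw [hE]
  have hp : 0 < Real.exp (-x) ^ m := by positivity
  generalize Real.exp (-x) ^ m = p at *
  generalize (1 + x) ^ m = a at *
  have heq : p - a⁻¹ = -((1 - p * a) / a) := by field_simp; ring
  rw [heq, abs_neg, abs_of_nonneg (div_nonneg (by linarith) ha.le),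
    div_le_div_iff₀ ha (by linarith)]
  have hpa : 0 < p * a := by positivity
  rcases Nat.lt_or_ge m 2 with h | h
  · have : m = 1 := by omega
    subst this
    norm_num at hlow ⊢
    linarith
  · have h2 : (2 : ℝ) ≤ m := by exact_mod_cast h
    have e1 : (1 - p * a) * m ≤ m * x ^ 2 * m :=
      mul_le_mul_of_nonneg_right (by linarith) (by linarith)
    have e2 : 0 ≤ (m : ℝ) * (m - 2) * x ^ 2 :=
      mul_nonneg (mul_nonneg (by linarith) (by linarith)) (by positivity)
    have e3 : 0 ≤ (m : ℝ) * x := by positivity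
    nlinarith
end

section
/- There exists a constant c > 0 such that for every m ∈ ℕ with m ≥ 1 and every real x ≥ 0, one has |e^{−m·x} − (1 + x)^{−m}| ≤ c · x. -/
open Real

/-- Scalar smooth-data error estimate for the backward Euler scheme:
there is `c > 0` with `|e^{-mx} - (1+x)^{-m}| ≤ c·x` for all `m ≥ 1`, `x ≥ 0`. -/
theorem backward_euler_smooth_symbol :
    ∃ c : ℝ, 0 < c ∧ ∀ m : ℕ, 1 ≤ m → ∀ x : ℝ, 0 ≤ x →
      |Real.exp (-(m : ℝ) * x) - ((1 + x) ^ m)⁻¹| ≤ c * x := by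
  refine ⟨1, one_pos, fun m _ x hx => ?_⟩
  have hpos : 0 < 1 + x := by linarith
  have hexp : Real.exp (-(m : ℝ) * x) = Real.exp (-x) ^ m := by
    rw [← Real.exp_nat_mul]; congr 1; ring
  rw [hexp, ← inv_pow]
  have he0 : 0 ≤ Real.exp (-x) := (Real.exp_pos _).le
  have her : Real.exp (-x) ≤ (1 + x)⁻¹ := by
    rw [Real.exp_neg]
    exact inv_anti₀ hpos (by linarith [Real.add_one_le_exp x])
  have hd : (1 + x)⁻¹ - Real.exp (-x) ≤ x ^ 2 * (1 + x)⁻¹ := by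
    have h1 := Real.add_one_le_exp (-x)
    have h2 : (1 + x)⁻¹ - (1 - x) = x ^ 2 * (1 + x)⁻¹ := by
      field_simp; ring
    linarith
  have hB : (m : ℝ) * x * (1 + x)⁻¹ ^ m ≤ 1 := by
    have h := one_add_mul_le_pow (by linarith : (-2 : ℝ) ≤ x) m
    rw [inv_pow, ← div_eq_mul_inv, div_le_one (pow_pos hpos m)]
    linarith
  have hr0 : 0 ≤ (1 + x)⁻¹ := (inv_pos.2 hpos).le
  generalize (1 + x)⁻¹ = r at *
  generalize Real.exp (-x) = e at *
  have key : ∀ k : ℕ, r ^ k - e ^ k ≤ k * x ^ 2 * r ^ k := by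
    intro k
    induction k with
    | zero => simp
    | succ k ih =>
      have hk : e ^ k ≤ r ^ k := pow_le_pow_left₀ he0 her k
      have a1 := mul_le_mul_of_nonneg_left ih hr0
      have a2 := mul_le_mul_of_nonneg_left hd (pow_nonneg he0 k)
      have a3 := mul_le_mul_of_nonneg_right hk (mul_nonneg (sq_nonneg x) hr0)
      push_cast
      rw [pow_succ, pow_succ]
      linarith
  have hm : e ^ m ≤ r ^ m := pow_le_pow_left₀ he0 her m
  rw [abs_sub_comm, abs_of_nonneg (by linarith)]
  have := mul_le_mul_of_nonneg_right hB hx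
  linarith [key m]
end

section
/- There exists a constant c > 0 such that for every θ ∈ [0,1], every m ∈ ℕ with m ≥ 1 and every real x > 0, one has |e^{−m·x} − (1 + x)^{−m}| ≤ c · x^θ · m^{θ−1}. -/
open Real

theorem aux_binom (x : ℝ) (hx : 0 < x) (m : ℕ) :
    1 + m * x + (m : ℝ) * (m - 1) / 2 * x ^ 2 ≤ (1 + x) ^ m := by
  induction m with
  | zero => simp
  | succ k ih =>
    rw [pow_succ]
    have h := mul_le_mul_of_nonneg_right ih (by linarith : (0:ℝ) ≤ 1 + x)
    refine le_trans ?_ h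
    push_cast
    have hk : 0 ≤ (k : ℝ) * (k - 1) := by
      rcases Nat.eq_zero_or_pos k with h0 | h0
      · simp [h0]
      · have : (1:ℝ) ≤ k := by exact_mod_cast h0
        exact mul_nonneg (by linarith) (by linarith)
    have h3 : 0 ≤ (k : ℝ) * (k - 1) * x ^ 3 := by positivity
    nlinarith

/-- Interpolated scalar error estimate for the backward Euler scheme:
there is `c > 0` with `|e^{-mx} - (1+x)^{-m}| ≤ c x^θ m^{θ-1}` for all
`θ ∈ [0,1]`, `m ≥ 1` and `x > 0`. -/
theorem backward_euler_interpolated_symbol :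
    ∃ c : ℝ, 0 < c ∧ ∀ θ : ℝ, θ ∈ Set.Icc (0:ℝ) 1 → ∀ m : ℕ, 1 ≤ m → ∀ x : ℝ, 0 < x →
      |Real.exp (-(m : ℝ) * x) - ((1 + x) ^ m)⁻¹| ≤ c * x ^ θ * (m : ℝ) ^ (θ - 1) := by
  refine ⟨4, by norm_num, ?_⟩
  rintro θ ⟨h0, h1⟩ m hm x hx
  have hm1 : (1:ℝ) ≤ m := by exact_mod_cast hm
  have hm0 : (0:ℝ) < m := by linarith
  have hP : 0 < (1 + x) ^ m := by positivity
  have hE : Real.exp (-(m : ℝ) * x) = (Real.exp (-x)) ^ m := by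
    rw [← Real.exp_nat_mul]; congr 1; ring
  have hexp : 1 - x ≤ Real.exp (-x) := by linarith [Real.add_one_le_exp (-x)]
  have hep := Real.exp_pos (-x)
  have hup : Real.exp (-x) * (1 + x) ≤ 1 := by
    have h := mul_le_mul_of_nonneg_left (Real.add_one_le_exp x) hep.le
    rw [← Real.exp_add] at h
    simp at h
    linarith
  have hA : Real.exp (-(m : ℝ) * x) * (1 + x) ^ m ≤ 1 := by
    rw [hE, ← mul_pow]
    exact pow_le_one₀ (by positivity) hup
  have hB : 1 - m * x ^ 2 ≤ Real.exp (-(m : ℝ) * x) * (1 + x) ^ m := by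
    rw [hE, ← mul_pow]
    have hpos : 0 < Real.exp (-x) * (1 + x) := by positivity
    have h := one_add_mul_le_pow (a := Real.exp (-x) * (1 + x) - 1) (by linarith) m
    rw [add_sub_cancel] at h
    refine le_trans ?_ h
    have : (1 - x) * (1 + x) ≤ Real.exp (-x) * (1 + x) :=
      mul_le_mul_of_nonneg_right hexp (by linarith)
    nlinarith
  have hb := aux_binom x hx m
  have hmm : 0 ≤ (m : ℝ) * (m - 1) / 2 * x ^ 2 :=
    mul_nonneg (div_nonneg (mul_nonneg hm0.le (by linarith)) (by norm_num)) (by positivity)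
  set e := Real.exp (-(m : ℝ) * x) with he
  have hepos : 0 < e := Real.exp_pos _
  set P := (1 + x) ^ m with hPdef
  have habs : |e - P⁻¹| = (1 - e * P) / P := by
    have h : e - P⁻¹ = -((1 - e * P) / P) := by field_simp; ring
    rw [h, abs_neg, abs_of_nonneg]
    exact div_nonneg (by linarith) hP.le
  have hD1 : |e - P⁻¹| ≤ x := by
    rw [habs, div_le_iff₀ hP]
    nlinarith
  have hD2 : |e - P⁻¹| ≤ 4 / m := by
    rw [habs, div_le_div_iff₀ hP hm0]
    rcases Nat.lt_or_ge m 2 with h2 | h2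
    · have : m = 1 := by omega
      have h' : (m : ℝ) = 1 := by exact_mod_cast this
      rw [h']
      have : 0 < e * P := by positivity
      have : 1 ≤ P := by nlinarith
      linarith
    · have h' : (2 : ℝ) ≤ m := by exact_mod_cast h2
      have h3 : (1 - e * P) * m ≤ m * x ^ 2 * m :=
        mul_le_mul_of_nonneg_right (by linarith) hm0.le
      have h4 : 0 ≤ (m : ℝ) * (m - 2) * x ^ 2 :=
        mul_nonneg (mul_nonneg hm0.le (by linarith)) (by positivity)
      nlinarith [mul_pos hm0 hx]
  have hR : 4 * x ^ θ * (m : ℝ) ^ (θ - 1) = 4 * (m * x) ^ θ / m := by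
    rw [Real.rpow_sub_one hm0.ne', Real.mul_rpow hm0.le hx.le]; ring
  rw [hR]
  have ht : 0 < m * x := by positivity
  rcases le_total (m * x) 1 with h | h
  · have h5 := Real.rpow_le_rpow_of_exponent_ge ht h h1
    rw [Real.rpow_one] at h5
    refine hD1.trans ?_
    rw [le_div_iff₀ hm0]
    linarith
  · have h5 := Real.one_le_rpow h h0
    refine hD2.trans ?_
    gcongr
    linarith
end

section
/- There exists a constant c > 0 such that the following holds: for every μ ∈ [0,2], every sequence of positive reals (λ_k)_{k∈ℕ}, every Δt > 0, every m ∈ ℕ with m ≥ 1, and every real sequence x = (x_k)_{k∈ℕ} such that (λ_k^{μ/2} x_k)_k is square-summable, the sequence ((e^{−m Δt λ_k} − (1 + Δt λ_k)^{−m}) x_k)_k is square-summable and ‖((e^{−m Δt λ_k} − (1+Δt λ_k)^{−m}) x_k)_k‖_{ℓ²} ≤ c · Δt · (m·Δt)^{−(2−μ)/2} · ‖(λ_k^{μ/2} x_k)_k‖_{ℓ²}. -/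
open Real

lemma aux_pow (s : ℝ) (hs : 0 < s) (m : ℕ) :
    1 + m * s + m * (m - 1) / 2 * s ^ 2 ≤ (1 + s) ^ m := by
  induction m with
  | zero => simp
  | succ n ih =>
    have h1 : (1 + n * s + n * (n - 1) / 2 * s ^ 2) * (1 + s) ≤ (1 + s) ^ n * (1 + s) :=
      mul_le_mul_of_nonneg_right ih (by linarith)
    rw [pow_succ]
    refine le_trans ?_ h1
    have h2 : 0 ≤ (n : ℝ) * (n - 1) := by
      rcases Nat.eq_zero_or_pos n with h | h
      · simp [h]
      · have : (1 : ℝ) ≤ n := by exact_mod_cast h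
        nlinarith
    have h3 : 0 ≤ (n : ℝ) * (n - 1) * s ^ 3 := mul_nonneg h2 (by positivity)
    push_cast
    nlinarith

lemma aux_d (s : ℝ) (hs : 0 < s) (m : ℕ) (hm : 1 ≤ m) :
    m * |Real.exp (-(m * s)) - ((1 + s) ^ m)⁻¹| ≤ m * s ∧
    m * |Real.exp (-(m * s)) - ((1 + s) ^ m)⁻¹| ≤ 4 := by
  have hP := aux_pow s hs m
  have hm1 : (1 : ℝ) ≤ m := by exact_mod_cast hm
  have hE : Real.exp (-(m * s)) = Real.exp (-s) ^ m := by
    rw [← Real.exp_nat_mul]; congr 1; ring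
  have hle : Real.exp (-(m * s)) ≤ ((1 + s) ^ m)⁻¹ := by
    rw [hE, Real.exp_neg, inv_pow]
    have := Real.add_one_le_exp s
    gcongr
    linarith
  have hB : 1 - m * s ^ 2 ≤ Real.exp (-(m * s)) * (1 + s) ^ m := by
    rw [hE, ← mul_pow]
    have h0 : 0 ≤ Real.exp (-s) * (1 + s) := by positivity
    have h1 := one_add_mul_le_pow (a := Real.exp (-s) * (1 + s) - 1) (by linarith) m
    have h2 : 1 - s ^ 2 ≤ Real.exp (-s) * (1 + s) := by
      have := Real.add_one_le_exp (-s)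
      nlinarith
    rw [add_sub_cancel] at h1
    nlinarith
  have hPpos : 0 < (1 + s) ^ m := by positivity
  rw [abs_of_nonpos (by linarith)]
  have hE0 := Real.exp_pos (-(m * s))
  set P := (1 + s) ^ m
  set e := Real.exp (-(m * s))
  have hd : m * (-(e - P⁻¹)) ≤ (m * s) ^ 2 / P := by
    rw [le_div_iff₀ hPpos]
    have : m * (-(e - P⁻¹)) * P = m * (1 - e * P) := by field_simp; ring
    rw [this]
    nlinarith
  have hms : 0 < m * s := by positivity
  have hq : 0 ≤ (m : ℝ) * (m - 1) / 2 * s ^ 2 := by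
    have : (0 : ℝ) ≤ m - 1 := by linarith
    positivity
  constructor
  · refine hd.trans ?_
    rw [div_le_iff₀ hPpos]
    nlinarith
  · rcases Nat.lt_or_ge m 2 with h | h
    · have : m = 1 := by omega
      have hm' : (m : ℝ) = 1 := by exact_mod_cast this
      have : P⁻¹ ≤ 1 := inv_le_one_of_one_le₀ (by linarith)
      rw [hm']; linarith
    · have h2 : (2 : ℝ) ≤ m := by exact_mod_cast h
      refine hd.trans ?_
      rw [div_le_iff₀ hPpos]
      have : 0 ≤ (m : ℝ) * (m - 2) * s ^ 2 := by
        have : (0 : ℝ) ≤ m - 2 := by linarith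
        positivity
      nlinarith

lemma aux_coef (μ : ℝ) (hμ : μ ∈ Set.Icc (0:ℝ) 2) (l Δt : ℝ) (hl : 0 < l) (ht : 0 < Δt)
    (m : ℕ) (hm : 1 ≤ m) :
    |Real.exp (-(m : ℝ) * Δt * l) - ((1 + Δt * l) ^ m)⁻¹| ≤
      4 * Δt * ((m : ℝ) * Δt) ^ (-((2 - μ) / 2)) * l ^ (μ / 2) := by
  obtain ⟨h1, h2⟩ := aux_d (Δt * l) (by positivity) m hm
  have hm0 : (0 : ℝ) < m := by exact_mod_cast hm
  have e1 : -(m : ℝ) * Δt * l = -(m * (Δt * l)) := by ring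
  rw [e1]
  have hR : 4 * Δt * ((m : ℝ) * Δt) ^ (-((2 - μ) / 2)) * l ^ (μ / 2)
      = 4 * (m * (Δt * l)) ^ (μ / 2) / m := by
    have e2 : -((2 - μ) / 2) = μ / 2 - 1 := by ring
    rw [e2, Real.rpow_sub_one (by positivity), ← mul_assoc (m : ℝ) Δt l,
      Real.mul_rpow (by positivity) hl.le]
    field_simp
  rw [hR, le_div_iff₀ hm0, mul_comm]
  have hy : 0 < m * (Δt * l) := by positivity
  rcases le_total (m * (Δt * l)) 1 with h | h
  · have := Real.rpow_le_rpow_of_exponent_ge hy h (show μ / 2 ≤ 1 by linarith [hμ.2])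
    rw [Real.rpow_one] at this
    linarith
  · have := Real.one_le_rpow h (show 0 ≤ μ / 2 by linarith [hμ.1])
    linarith

/-- Spectral (diagonal) form of the backward Euler semigroup error estimate:
there is `c > 0` such that for `μ ∈ [0,2]`, positive `(λ_k)`, `Δt > 0`, `m ≥ 1`
and any `(x_k)` with `(λ_k^{μ/2} x_k) ∈ ℓ²`, the sequence
`((e^{-mΔtλ_k} - (1+Δtλ_k)^{-m}) x_k)` is in `ℓ²` with norm at most
`c Δt (mΔt)^{-(2-μ)/2} ‖(λ_k^{μ/2} x_k)‖_{ℓ²}`. -/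
theorem backward_euler_error_diagonal :
    ∃ c : ℝ, 0 < c ∧ ∀ μ : ℝ, μ ∈ Set.Icc (0:ℝ) 2 → ∀ lam : ℕ → ℝ, (∀ k, 0 < lam k) →
      ∀ Δt : ℝ, 0 < Δt → ∀ m : ℕ, 1 ≤ m → ∀ x : ℕ → ℝ,
      (Summable fun k => (lam k ^ (μ / 2) * x k) ^ 2) →
      (Summable fun k =>
          ((Real.exp (-(m : ℝ) * Δt * lam k) - ((1 + Δt * lam k) ^ m)⁻¹) * x k) ^ 2) ∧
        Real.sqrt (∑' k,
            ((Real.exp (-(m : ℝ) * Δt * lam k) - ((1 + Δt * lam k) ^ m)⁻¹) * x k) ^ 2)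
          ≤ c * Δt * ((m : ℝ) * Δt) ^ (-((2 - μ) / 2)) *
              Real.sqrt (∑' k, (lam k ^ (μ / 2) * x k) ^ 2) := by
  refine ⟨4, by norm_num, ?_⟩
  intro μ hμ lam hlam Δt ht m hm x hx
  set K := 4 * Δt * ((m : ℝ) * Δt) ^ (-((2 - μ) / 2)) with hK
  have hK0 : 0 ≤ K := by positivity
  have hb : ∀ k, ((Real.exp (-(m : ℝ) * Δt * lam k) - ((1 + Δt * lam k) ^ m)⁻¹) * x k) ^ 2
      ≤ K ^ 2 * (lam k ^ (μ / 2) * x k) ^ 2 := by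
    intro k
    have h := aux_coef μ hμ (lam k) Δt (hlam k) ht m hm
    rw [← hK] at h
    have h2 := sq_le_sq' (neg_le_of_abs_le h) (le_of_abs_le h)
    calc _ = (Real.exp (-(m : ℝ) * Δt * lam k) - ((1 + Δt * lam k) ^ m)⁻¹) ^ 2 * x k ^ 2 := by ring
      _ ≤ (K * lam k ^ (μ / 2)) ^ 2 * x k ^ 2 := by gcongr
      _ = _ := by ring
  have hs := Summable.of_nonneg_of_le (fun k => sq_nonneg _) hb (hx.mul_left (K ^ 2))
  refine ⟨hs, ?_⟩
  have h := hs.tsum_le_tsum hb (hx.mul_left (K ^ 2))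
  rw [tsum_mul_left] at h
  refine (Real.sqrt_le_sqrt h).trans ?_
  rw [Real.sqrt_mul (sq_nonneg K), Real.sqrt_sq hK0]
end

section
/- For every T > 0 and every c₂ ≥ 0 there exists a constant C > 0 such that: for every N ∈ ℕ with N ≥ 1, setting Δt := T/N and t_j := j·Δt, for every c₁ ≥ 0 and every finite sequence of nonnegative real numbers (x_n)_{n=0}^{N} satisfying x_n ≤ c₁ + c₂ · Δt · ∑_{j=1}^{n} (t_n − t_{j−1})^{−1/2} · x_{j−1} for all n ∈ {0, 1, …, N}, it holds that x_n ≤ C · c₁ for all n ∈ {0, 1, …, N}. -/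
open Real Finset

lemma dg_step (a h : ℝ) (ha : 0 < a) (hh : 0 < h) (k : ℕ) :
    h * (((k + 1 : ℕ) : ℝ) * h) ^ (-(1/2) : ℝ) * Real.exp (-(a ^ 2 * (((k + 1 : ℕ) : ℝ) * h)))
      ≤ 4 / a * (Real.exp (-(a * √((k : ℝ) * h))) - Real.exp (-(a * √(((k + 1 : ℕ) : ℝ) * h)))) := by
  have hs : 0 < ((k + 1 : ℕ) : ℝ) * h := by positivity
  have hr : (((k + 1 : ℕ) : ℝ) * h) ^ (-(1/2) : ℝ) = (√(((k + 1 : ℕ) : ℝ) * h))⁻¹ := by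
    rw [Real.rpow_neg hs.le, Real.sqrt_eq_rpow]
  rw [hr]
  have hu2 : √(((k + 1 : ℕ) : ℝ) * h) ^ 2 = ((k + 1 : ℕ) : ℝ) * h := Real.sq_sqrt hs.le
  have hv2 : √((k : ℝ) * h) ^ 2 = (k : ℝ) * h := Real.sq_sqrt (by positivity)
  have hu : 0 < √(((k + 1 : ℕ) : ℝ) * h) := Real.sqrt_pos.2 hs
  have hv : 0 ≤ √((k : ℝ) * h) := Real.sqrt_nonneg _
  rw [← hu2]
  have hd : √(((k + 1 : ℕ) : ℝ) * h) ^ 2 - √((k : ℝ) * h) ^ 2 = h := by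
    rw [hu2, hv2]; push_cast; ring
  rw [Real.sqrt_sq hu.le]
  generalize √(((k + 1 : ℕ) : ℝ) * h) = u at *
  generalize √((k : ℝ) * h) = v at *
  have hvu : v ≤ u := by nlinarith
  have h1 : Real.exp (-(a ^ 2 * u ^ 2)) ≤ 2 * Real.exp (-(a * u)) := by
    have h2 : Real.exp (-(1/4) : ℝ) ≥ 1/2 := by
      have := Real.add_one_le_exp (-(1/4) : ℝ); linarith
    have h3 : Real.exp (-(a ^ 2 * u ^ 2)) * Real.exp (-(1/4) : ℝ) ≤ Real.exp (-(a * u)) := by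
      rw [← Real.exp_add]
      apply Real.exp_le_exp.2
      nlinarith [sq_nonneg (a * u - 1/2)]
    nlinarith [Real.exp_pos (-(a ^ 2 * u ^ 2))]
  have h4 : Real.exp (-(a * u)) * (a * (u - v)) ≤ Real.exp (-(a * v)) - Real.exp (-(a * u)) := by
    have : Real.exp (-(a * v)) = Real.exp (-(a * u)) * Real.exp (a * (u - v)) := by
      rw [← Real.exp_add]; congr 1; ring
    rw [this]
    have := Real.add_one_le_exp (a * (u - v))
    nlinarith [Real.exp_pos (-(a * u))]
  have h5 : h * u⁻¹ ≤ 2 * (u - v) := by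
    rw [← div_eq_mul_inv, div_le_iff₀ hu]
    nlinarith [sq_nonneg (u - v)]
  calc h * u⁻¹ * Real.exp (-(a ^ 2 * u ^ 2))
      ≤ (2 * (u - v)) * (2 * Real.exp (-(a * u))) := by
        apply mul_le_mul h5 h1 (Real.exp_pos _).le; linarith
    _ = 4 / a * (Real.exp (-(a * u)) * (a * (u - v))) := by field_simp; ring
    _ ≤ _ := by gcongr

lemma dg_sum (a h : ℝ) (ha : 0 < a) (hh : 0 < h) (n : ℕ) :
    ∑ k ∈ Finset.range n, h * (((k + 1 : ℕ) : ℝ) * h) ^ (-(1/2) : ℝ) *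
      Real.exp (-(a ^ 2 * (((k + 1 : ℕ) : ℝ) * h))) ≤ 4 / a := by
  refine (Finset.sum_le_sum fun k _ => dg_step a h ha hh k).trans ?_
  rw [← Finset.mul_sum,
    Finset.sum_range_sub' (fun k : ℕ => Real.exp (-(a * √((k : ℝ) * h)))) n]
  have : 0 < 4 / a := by positivity
  have h1 := Real.exp_pos (-(a * √((n : ℝ) * h)))
  simp only [Nat.cast_zero, zero_mul, Real.sqrt_zero, mul_zero, neg_zero, Real.exp_zero]
  nlinarith

lemma dg_reindex (n : ℕ) (f : ℕ → ℕ → ℝ) :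
    ∑ j ∈ Finset.Icc 1 n, f (n - j + 1) (j - 1) =
      ∑ k ∈ Finset.range n, f (k + 1) (n - (k + 1)) := by
  refine Finset.sum_nbij' (fun j => n - j) (fun k => n - k) ?_ ?_ ?_ ?_ ?_
  · intro j hj; simp at hj ⊢; omega
  · intro j hj; simp at hj ⊢; omega
  · intro j hj; simp at hj ⊢; omega
  · intro j hj; simp at hj ⊢; omega
  · intro j hj
    simp at hj
    congr 1
    omega

/-- Discrete Gronwall inequality with weakly singular kernel of exponent `1/2`:
for any `T > 0` and `c₂ ≥ 0` there is `C > 0` such that for any `N ≥ 1`,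
with `Δt = T/N`, any `c₁ ≥ 0` and any nonnegative `(x_n)_{n=0}^N` with
`x_n ≤ c₁ + c₂ Δt ∑_{j=1}^n ((n-j+1)Δt)^{-1/2} x_{j-1}` for all `n ≤ N`,
one has `x_n ≤ C c₁` for all `n ≤ N`. -/
theorem discrete_gronwall_weakly_singular (T : ℝ) (hT : 0 < T) (c₂ : ℝ) (hc₂ : 0 ≤ c₂) :
    ∃ C : ℝ, 0 < C ∧ ∀ N : ℕ, 1 ≤ N → ∀ c₁ : ℝ, 0 ≤ c₁ → ∀ x : ℕ → ℝ,
      (∀ n ≤ N, 0 ≤ x n) →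
      (∀ n ≤ N, x n ≤ c₁ + c₂ * (T / N) *
          ∑ j ∈ Finset.Icc 1 n, (((n - j + 1 : ℕ) : ℝ) * (T / N)) ^ (-(1/2) : ℝ) * x (j - 1)) →
      ∀ n ≤ N, x n ≤ C * c₁ := by
  have ha : 0 < 8 * (c₂ + 1) := by linarith
  have hca : c₂ * (4 / (8 * (c₂ + 1))) ≤ 1 / 2 := by
    rw [← mul_div_assoc, div_le_iff₀ ha]; linarith
  generalize 8 * (c₂ + 1) = a at ha hca
  refine ⟨2 * Real.exp (a ^ 2 * T), by positivity, ?_⟩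
  intro N hN c₁ hc₁ x hx0 hx
  have hN' : (0 : ℝ) < N := by exact_mod_cast hN
  have hh : 0 < T / N := by positivity
  have hNh : (N : ℝ) * (T / N) = T := by field_simp
  generalize T / (N : ℝ) = h at *
  have key : ∀ n ≤ N, x n ≤ 2 * c₁ * Real.exp (a ^ 2 * (n * h)) := by
    intro n
    induction n using Nat.strong_induction_on with
    | _ n ih =>
      intro hn
      have h1 := hx n hn
      rw [dg_reindex n (fun p q => ((p : ℝ) * h) ^ (-(1/2) : ℝ) * x q)] at h1
      have h2 : h * ∑ k ∈ Finset.range n, (((k + 1 : ℕ) : ℝ) * h) ^ (-(1/2) : ℝ) * x (n - (k + 1))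
          ≤ 2 * c₁ * Real.exp (a ^ 2 * (n * h)) * (4 / a) := by
        refine le_trans ?_ (mul_le_mul_of_nonneg_left (dg_sum a h ha hh n) (by positivity))
        rw [Finset.mul_sum, Finset.mul_sum]
        apply Finset.sum_le_sum
        intro k hk
        have hk' : k + 1 ≤ n := Finset.mem_range.1 hk
        have h3 := ih (n - (k + 1)) (by omega) (by omega)
        rw [Nat.cast_sub hk'] at h3
        have h4 : Real.exp (a ^ 2 * (((n : ℝ) - ((k + 1 : ℕ) : ℝ)) * h)) =
            Real.exp (a ^ 2 * (n * h)) * Real.exp (-(a ^ 2 * (((k + 1 : ℕ) : ℝ) * h))) := by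
          rw [← Real.exp_add]; congr 1; ring
        rw [h4] at h3
        have h5 : 0 ≤ h * (((k + 1 : ℕ) : ℝ) * h) ^ (-(1/2) : ℝ) := by positivity
        have h6 := mul_le_mul_of_nonneg_left h3 h5
        linarith
      have h7 := mul_le_mul_of_nonneg_left h2 hc₂
      have hE : 1 ≤ Real.exp (a ^ 2 * (n * h)) := Real.one_le_exp (by positivity)
      have h8 := mul_le_mul_of_nonneg_left hca
        (show 0 ≤ 2 * c₁ * Real.exp (a ^ 2 * (n * h)) by positivity)
      have h9 := mul_le_mul_of_nonneg_left hE hc₁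
      rw [mul_assoc] at h1
      linarith
  intro n hn
  have hnT : (n : ℝ) * h ≤ T := by
    rw [← hNh]; gcongr
  calc x n ≤ 2 * c₁ * Real.exp (a ^ 2 * (n * h)) := key n hn
    _ ≤ 2 * c₁ * Real.exp (a ^ 2 * T) := by gcongr
    _ = _ := by ring
end
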